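/- arXiv:1801.06162 — 4 statements merged into one kernel-verified Lean document; each statement's English description precedes it below -/
import Mathlib

section
/- Let p be a prime and let T be an abelian group in which every element has order a power of p. Suppose the subgroup T[p] = {t ∈ T : p·t = 0} is finite. Then every injective endomorphism of T is surjective. -/
/-!
A homomorphism with finite kernel has finite fibres, hence so do its iterates. Let `φ` be a locally
nilpotent endomorphism of `T` with finite kernel, such as multiplication by `p`. Then `T` is the
union of the finite sets `ker (φ ^ k)`. A map commuting with `φ` preserves each of them, and an
injective self-map of a finite set is surjective.
-/

open Filter Function Set

theorem surjective_of_injective_of_forall_mem_finite_mapsTo {X : Type*} {σ : X → X}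
    (hσ : Injective σ) (hs : ∀ x, ∃ s : Set X, s.Finite ∧ MapsTo σ s s ∧ x ∈ s) :
    Surjective σ := by
  intro x
  obtain ⟨s, hfin, hmaps, hx⟩ := hs x
  have hbij : BijOn σ s s := (hfin.injOn_iff_bijOn_of_mapsTo hmaps).1 hσ.injOn
  obtain ⟨y, -, hy⟩ := hbij.surjOn hx
  exact ⟨y, hy⟩

theorem tendstoCofinite_of_finite_ker {G H : Type*} [AddGroup G] [AddGroup H] (φ : G →+ H)
    (hφ : (φ.ker : Set G).Finite) : TendstoCofinite φ := by
  refine (tendstoCofinite_iff_finite_preimage_singleton φ).2 fun b ↦ ?_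
  obtain hb | ⟨a, rfl⟩ := (φ ⁻¹' {b}).eq_empty_or_nonempty
  · exact hb ▸ finite_empty
  · have : Finite φ.ker := hφ.to_subtype
    exact Finite.of_equiv φ.ker (φ.fiberEquivKer a).symm

theorem tendstoCofinite_iterate {X : Type*} {f : X → X} (hf : TendstoCofinite f) (k : ℕ) :
    TendstoCofinite f^[k] :=
  ⟨hf.tendsto_cofinite.iterate k⟩

theorem isFixedPt_of_commute_of_forall_exists_iterate_eq {X : Type*} {σ f : X → X} {a : X}
    (hcomm : Function.Commute σ f) (ha : IsFixedPt f a) (hf : ∀ x, ∃ k, f^[k] x = a) :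
    IsFixedPt σ a := by
  obtain ⟨k, hk⟩ := hf (σ a)
  calc σ a = σ (f^[k] a) := by rw [ha.iterate k]
    _ = f^[k] (σ a) := hcomm.iterate_right k a
    _ = a := hk

theorem mapsTo_iterate_preimage_singleton {X : Type*} {σ f : X → X} {a : X}
    (hcomm : Function.Commute σ f) (ha : IsFixedPt σ a) (k : ℕ) :
    MapsTo σ (f^[k] ⁻¹' {a}) (f^[k] ⁻¹' {a}) := by
  intro x (hx : f^[k] x = a)
  calc f^[k] (σ x) = σ (f^[k] x) := (hcomm.iterate_right k x).symm
    _ = σ a := by rw [hx]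
    _ = a := ha

theorem injective_endomorphism_surjective_of_p_torsion_general
    {T : Type*} [AddGroup T] (φ : T →+ T)
    (hnil : ∀ t : T, ∃ k : ℕ, φ^[k] t = 0)
    (hfin : {t : T | φ t = 0}.Finite)
    (σ : T → T) (hcomm : Function.Commute σ φ) (hinj : Injective σ) :
    Surjective σ := by
  have hφ : TendstoCofinite φ := tendstoCofinite_of_finite_ker φ hfin
  have hσ : IsFixedPt σ 0 :=
    isFixedPt_of_commute_of_forall_exists_iterate_eq hcomm (map_zero φ) hnil
  refine surjective_of_injective_of_forall_mem_finite_mapsTo hinj fun t ↦ ?_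
  obtain ⟨k, hk⟩ := hnil t
  have hφk : TendstoCofinite φ^[k] := tendstoCofinite_iterate hφ k
  exact ⟨φ^[k] ⁻¹' {0}, hφk.finite_preimage_singleton _ 0,
    mapsTo_iterate_preimage_singleton hcomm hσ k, hk⟩

/-- Let `p` be a prime and `T` an abelian group in which every element has
order a power of `p`. If `T[p] = {t : p • t = 0}` is finite, then every injective
endomorphism of `T` is surjective. -/
theorem injective_endomorphism_surjective_of_p_torsion
    {T : Type*} [AddCommGroup T] (p : ℕ) (hp : p.Prime)
    (htor : ∀ t : T, ∃ k : ℕ, p ^ k • t = 0)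
    (hfin : {t : T | p • t = 0}.Finite)
    (σ : T →+ T) (hinj : Function.Injective σ) :
    Function.Surjective σ := by
  have hnil (t : T) : ∃ k : ℕ, (nsmulAddMonoidHom p)^[k] t = 0 := by
    obtain ⟨k, hk⟩ := htor t
    exact ⟨k, (congrFun (smul_iterate p k) t).trans hk⟩
  exact injective_endomorphism_surjective_of_p_torsion_general (nsmulAddMonoidHom p) hnil hfin σ
    (fun t ↦ map_nsmul σ p t) hinj
end

section
/- Let A be a torsion-free abelian group of finite rank (i.e. ℚ ⊗_ℤ A is a finite-dimensional ℚ-vector space) and let B be a subgroup of A of the same rank (equivalently, the quotient A/B is a torsion group). Suppose σ is an endomorphism of A with σ(B) = B. Then σ is an automorphism of A. -/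
open TensorProduct

/-!
Let `M` be a torsion-free module of finite rank over a principal ideal domain `R`, `N ≤ M` with
torsion quotient, and `σ` an endomorphism of `M` with `N ≤ σ(N)`. Up to torsion `σ` is surjective,
so comparing ranks makes it injective.

For surjectivity, write `r • m ∈ N` as `σ b` with `b ∈ N`. The reduction `M / rM` is Noetherian
because `M` has finite rank, and the image of `N` in it is contained in its own image under `σ`,
hence `σ` is injective there. Since `σ b = r • m` vanishes modulo `r`, so does `b`; if `b = r • c`,
then cancelling `r` gives `σ c = m`. Adding one prime factor of `r` at a time, this only needs
the reductions modulo a prime `p`, whose dimension over `R / (p)` is at most the rank of `M`.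
-/

open Cardinal Ideal Submodule

theorem disjoint_ker_of_le_map {R M : Type*} [Ring R] [AddCommGroup M] [Module R M]
    {N : Submodule R M} [IsNoetherian R N] {f : M →ₗ[R] M} (hN : N ≤ N.map f) :
    Disjoint N (LinearMap.ker f) := by
  let i : ↥(N ⊓ N.comap f) →ₗ[R] N := inclusion inf_le_left
  let g : ↥(N ⊓ N.comap f) →ₗ[R] N := f.restrict fun _ hx ↦ hx.2
  have hg : Function.Surjective g := by
    rintro ⟨y, hy⟩
    obtain ⟨x, hx, rfl⟩ := hN hy
    exact ⟨⟨x, hx, hy⟩, rfl⟩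
  have hg_inj : Function.Injective g :=
    IsNoetherian.injective_of_surjective_of_injective i g (inclusion_injective inf_le_left) hg
  refine disjoint_def.2 fun x hx hfx ↦ ?_
  have hfx' : f x = 0 := hfx
  have hxN : x ∈ N ⊓ N.comap f := ⟨hx, by simp [hfx']⟩
  have : (⟨x, hxN⟩ : ↥(N ⊓ N.comap f)) = 0 := hg_inj (Subtype.ext (by simp [g, hfx']))
  exact congrArg Subtype.val this

theorem injective_of_forall_exists_smul_mem_range {R M : Type*} [CommRing R] [IsDomain R]
    [AddCommGroup M] [Module R M] [Module.IsTorsionFree R M] (hM : Module.rank R M < ℵ₀)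
    {f : M →ₗ[R] M} (hf : ∀ m, ∃ r : R, r ≠ 0 ∧ r • m ∈ LinearMap.range f) :
    Function.Injective f := by
  have hcoker : Module.rank R (M ⧸ LinearMap.range f) = 0 := by
    refine rank_eq_zero_iff.2 (mkQ_surjective _ |>.forall.2 fun m ↦ ?_)
    obtain ⟨r, hr, hrm⟩ := hf m
    exact ⟨r, hr, by rwa [← map_smul, mkQ_apply, Quotient.mk_eq_zero]⟩
  have hrange : Module.rank R (LinearMap.range f) = Module.rank R M := by
    rw [← rank_quotient_add_rank_of_isDomain (LinearMap.range f), hcoker, zero_add]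
  have hker : Module.rank R (LinearMap.ker f) = 0 := by
    have h := rank_quotient_add_rank_of_isDomain (LinearMap.ker f)
    rw [f.quotKerEquivRange.rank_eq, hrange] at h
    exact Cardinal.eq_of_add_eq_add_left (h.trans (add_zero _).symm) hM
  exact LinearMap.ker_eq_bot.1 (rank_eq_zero.1 hker)

section ReductionModPrime

variable {R M : Type*} [CommRing R] [IsDomain R] [AddCommGroup M] [Module R M]
  [Module.IsTorsionFree R M]

theorem linearIndependent_of_mkQ_prime_smul_top [UniqueFactorizationMonoid R] {p : R}
    (hp : Prime p) {ι : Type*} {v : ι → M}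
    (hv : LinearIndependent (R ⧸ span {p})
      fun i ↦ (span {p} • (⊤ : Submodule R M)).mkQ (v i)) :
    LinearIndependent R v := by
  let _ : NormalizedGCDMonoid R := Classical.arbitrary _
  rw [linearIndependent_iff'] at hv ⊢
  intro s c hc i hi
  by_contra hci
  -- Dividing a relation by the gcd of its coefficients keeps it nontrivial modulo `p`.
  obtain ⟨d, hcd, hd⟩ := s.extract_gcd c ⟨i, hi⟩
  have hgcd : s.gcd c ≠ 0 := fun h ↦ hci (Finset.gcd_eq_zero_iff.1 h i hi)
  have hd_sum : ∑ j ∈ s, d j • v j = 0 := by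
    refine (smul_eq_zero_iff_right hgcd).1 ?_
    rw [← hc, Finset.smul_sum]
    exact Finset.sum_congr rfl fun j hj ↦ by rw [hcd j hj, mul_smul]
  have hd_mod : ∑ j ∈ s, Ideal.Quotient.mk (span {p}) (d j) •
      (span {p} • (⊤ : Submodule R M)).mkQ (v j) = 0 := by
    simpa only [map_sum, map_smul, map_zero] using!
      congrArg (span {p} • (⊤ : Submodule R M)).mkQ hd_sum
  have hp_dvd : p ∣ s.gcd d := Finset.dvd_gcd fun j hj ↦
    mem_span_singleton.1 (Ideal.Quotient.eq_zero_iff_mem.1 (hv s _ hd_mod j hj))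
  exact hp.not_dvd_one (hd ▸ hp_dvd)

theorem rank_quotient_prime_smul_top_le [UniqueFactorizationMonoid R] {p : R} (hp : Prime p) :
    Module.rank (R ⧸ span {p}) (M ⧸ span {p} • (⊤ : Submodule R M)) ≤ Module.rank R M := by
  rw [Module.rank_def]
  refine ciSup_le' fun ⟨s, hs⟩ ↦ ?_
  choose v hv using fun x : s ↦ mkQ_surjective (span {p} • (⊤ : Submodule R M)) x
  refine (linearIndependent_of_mkQ_prime_smul_top hp (v := v) ?_).cardinal_le_rank
  simpa only [hv] using! hs

variable [IsPrincipalIdealRing R]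

theorem isNoetherian_quotient_prime_smul_top (hM : Module.rank R M < ℵ₀) {p : R} (hp : Prime p) :
    IsNoetherian R (M ⧸ span {p} • (⊤ : Submodule R M)) := by
  have := PrincipalIdealRing.isMaximal_of_irreducible hp.irreducible
  let _ : Field (R ⧸ span {p}) := Ideal.Quotient.field _
  have : Module.Finite (R ⧸ span {p}) (M ⧸ span {p} • (⊤ : Submodule R M)) :=
    Module.rank_lt_aleph0_iff.1 ((rank_quotient_prime_smul_top_le hp).trans_lt hM)
  have : Module.Finite R (M ⧸ span {p} • (⊤ : Submodule R M)) := .trans (R ⧸ span {p}) _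
  infer_instance

end ReductionModPrime

section Divisibility

variable {R M : Type*} [CommRing R] [AddCommGroup M] [Module R M] {N : Submodule R M}
  {f : M →ₗ[R] M}

theorem comap_lsmul_le_map_comap_lsmul {r : R} (hr : IsSMulRegular M r)
    [IsNoetherian R (M ⧸ span {r} • (⊤ : Submodule R M))] (hN : N ≤ N.map f) :
    N.comap (LinearMap.lsmul R M r) ≤ (N.comap (LinearMap.lsmul R M r)).map f := by
  set rM : Submodule R M := span {r} • ⊤ with hrM
  have mem_rM {x : M} : x ∈ rM ↔ ∃ y, r • y = x := by
    simp [hrM, ideal_span_singleton_smul, mem_smul_pointwise_iff_exists]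
  have hf : rM ≤ rM.comap f := fun x hx ↦ by
    obtain ⟨y, rfl⟩ := mem_rM.1 hx
    exact mem_rM.2 ⟨f y, (map_smul f r y).symm⟩
  have hN_mod : N.map rM.mkQ ≤ (N.map rM.mkQ).map (rM.mapQ rM f hf) := by
    rw [← Submodule.map_comp, mapQ_mkQ, Submodule.map_comp]
    exact map_mono hN
  intro m hm
  obtain ⟨b, hbN, hb : f b = r • m⟩ := hN hm
  have hb_mod : rM.mkQ b = 0 := by
    refine disjoint_def.1 (disjoint_ker_of_le_map hN_mod) _ (mem_map_of_mem hbN) ?_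
    rw [LinearMap.mem_ker, mkQ_apply, mapQ_apply, hb, Quotient.mk_eq_zero]
    exact mem_rM.2 ⟨m, rfl⟩
  obtain ⟨c, rfl⟩ := mem_rM.1 ((Quotient.mk_eq_zero _).1 hb_mod)
  exact ⟨c, hbN, hr (by simpa only [map_smul] using hb)⟩

theorem comap_lsmul_le_map_comap_lsmul_of_rank_lt_aleph0 [IsDomain R] [IsPrincipalIdealRing R]
    [Module.IsTorsionFree R M] (hM : Module.rank R M < ℵ₀) {r : R} (hr : r ≠ 0) (hN : N ≤ N.map f) :
    N.comap (LinearMap.lsmul R M r) ≤ (N.comap (LinearMap.lsmul R M r)).map f := by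
  induction r using UniqueFactorizationMonoid.induction_on_prime with
  | h₁ => exact absurd rfl hr
  | h₂ u hu =>
    have : N.comap (LinearMap.lsmul R M u) = N := by
      ext m
      exact N.smul_mem_iff_of_isUnit hu
    rwa [this]
  | h₃ a p ha hp ih =>
    have := isNoetherian_quotient_prime_smul_top hM hp
    have comap_mul : N.comap (LinearMap.lsmul R M (p * a)) =
        (N.comap (LinearMap.lsmul R M a)).comap (LinearMap.lsmul R M p) := by
      ext m
      simp [mul_smul, smul_comm p a m]
    rw [comap_mul]
    exact comap_lsmul_le_map_comap_lsmul (.of_ne_zero hp.ne_zero) (ih ha)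

end Divisibility

theorem endomorphism_bijective_of_stabilises_full_rank_subgroup_general
    {R M : Type*} [CommRing R] [IsDomain R] [IsPrincipalIdealRing R]
    [AddCommGroup M] [Module R M] [Module.IsTorsionFree R M] (hM : Module.rank R M < ℵ₀)
    {N : Submodule R M} (hN : ∀ m : M, ∃ r : R, r ≠ 0 ∧ r • m ∈ N)
    {σ : M →ₗ[R] M} (hσN : N ≤ N.map σ) :
    Function.Bijective σ := by
  refine ⟨injective_of_forall_exists_smul_mem_range hM fun m ↦ ?_, fun m ↦ ?_⟩
  · obtain ⟨r, hr, hrm⟩ := hN m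
    exact ⟨r, hr, LinearMap.map_le_range (hσN hrm)⟩
  · obtain ⟨r, hr, hrm⟩ := hN m
    obtain ⟨c, -, hc⟩ := comap_lsmul_le_map_comap_lsmul_of_rank_lt_aleph0 hM hr hσN hrm
    exact ⟨c, hc⟩

/-- Let `A` be a torsion-free abelian group of finite rank (i.e. the
`ℚ`-vector space `ℚ ⊗[ℤ] A` is finite-dimensional) and `B ≤ A` a subgroup of the same rank
(equivalently `A/B` is torsion, i.e. every element of `A` has a positive multiple lying
in `B`).  If `σ` is an endomorphism of `A` with `σ(B) = B`, then `σ` is an automorphism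
of `A`. -/
theorem endomorphism_bijective_of_stabilises_full_rank_subgroup
    {A : Type*} [AddCommGroup A]
    (htf : ∀ (a : A) (n : ℕ), 0 < n → n • a = 0 → a = 0)
    [FiniteDimensional ℚ (ℚ ⊗[ℤ] A)]
    (B : AddSubgroup A) (hB : ∀ a : A, ∃ n : ℕ, 0 < n ∧ n • a ∈ B)
    (σ : A →+ A) (hσB : B.map σ = B) :
    Function.Bijective σ := by
  have : IsAddTorsionFree A := .of_not_isOfFinAddOrder fun a ha h ↦ by
    obtain ⟨n, hn, hna⟩ := isOfFinAddOrder_iff_nsmul_eq_zero.1 h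
    exact ha (htf a n hn hna)
  have hA : Module.rank ℤ A < ℵ₀ :=
    (TensorProduct.isBaseChange ℤ A ℚ).rank_eq ▸ Module.rank_lt_aleph0 ℚ (ℚ ⊗[ℤ] A)
  have hB' (a : A) : ∃ n : ℤ, n ≠ 0 ∧ n • a ∈ B.toIntSubmodule := by
    obtain ⟨n, hn, hna⟩ := hB a
    exact ⟨n, by exact_mod_cast hn.ne', by rwa [natCast_zsmul]⟩
  exact endomorphism_bijective_of_stabilises_full_rank_subgroup_general hA hB'
    (σ := σ.toIntLinearMap) hσB.ge
end

section
/- Let N be a torsion-free nilpotent group of finite Prüfer rank and σ an injective endomorphism of N. Then σ preserves the upper central series: σ(Z^{i}(N)) ≤ Z^{i}(N) for every i ≥ 0. In particular σ maps the centre Z(N) into itself. -/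
/-- A group has finite Prüfer rank if there is `r` such that every finitely generated
subgroup can be generated by at most `r` elements. -/
def HasFinitePruferRank (G : Type*) [Group G] : Prop :=
  ∃ r : ℕ, ∀ H : Subgroup G, H.FG →
    ∃ S : Finset G, S.card ≤ r ∧ Subgroup.closure (S : Set G) = H

/-!
Since `N` has finite Prüfer rank, every descending chain of subgroups of `N` is eventually constant
up to taking roots: this is a rank count in abelian groups, and it lifts through central extensions.
Applied to the chain `N ≥ σ(N) ≥ σ²(N) ≥ ⋯`, and pulled back along powers of the injective `σ`,
this shows that every element of `N` has a positive power in `σ(N)`. Now let `x ∈ Zⁱ⁺¹(N)` and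
`y ∈ N`, and write `yᵏ = σ(g)`. By induction `⁅σ(x), yᵏ⁆ = σ(⁅x, g⁆)` lies in `Zⁱ(N)`. As `N` is
nilpotent and the factors `Zʲ⁺¹(N)/Zʲ(N)` of a torsion-free group are torsion-free, so does
`⁅σ(x), y⁆`.
-/

open scoped commutatorElement IsMulCommutative

section Commutators

variable {G : Type*} [Group G]

theorem commutatorElement_pow_left {x y : G} (h : Commute x ⁅x, y⁆) (n : ℕ) :
    ⁅x ^ n, y⁆ = ⁅x, y⁆ ^ n := by
  have hconj : Commute x (y * x⁻¹ * y⁻¹) := by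
    have : y * x⁻¹ * y⁻¹ = x⁻¹ * ⁅x, y⁆ := by rw [commutatorElement_def]; group
    rw [this]
    exact (Commute.refl x).inv_right.mul_right h
  calc ⁅x ^ n, y⁆ = x ^ n * (y * x⁻¹ * y⁻¹) ^ n := by
        rw [conj_pow, inv_pow, commutatorElement_def]; group
    _ = (x * (y * x⁻¹ * y⁻¹)) ^ n := (hconj.mul_pow n).symm
    _ = ⁅x, y⁆ ^ n := by rw [commutatorElement_def]; group

theorem commutatorElement_pow_left_mem_upperCentralSeries_iff {i : ℕ} {x y : G}
    (h : ⁅x, y⁆ ∈ Subgroup.upperCentralSeries G (i + 1)) (n : ℕ) :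
    ⁅x ^ n, y⁆ ∈ Subgroup.upperCentralSeries G i ↔
      ⁅x, y⁆ ^ n ∈ Subgroup.upperCentralSeries G i := by
  let π := QuotientGroup.mk' (Subgroup.upperCentralSeries G i)
  have hcenter : ⁅π x, π y⁆ ∈ Subgroup.center (G ⧸ Subgroup.upperCentralSeries G i) := by
    rw [← map_commutatorElement, ← Subgroup.mem_comap,
      ← Subgroup.upperCentralSeriesStep_eq_comap_center]
    exact h
  have hpow : π ⁅x ^ n, y⁆ = π (⁅x, y⁆ ^ n) := by
    simpa only [map_commutatorElement, map_pow] using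
      commutatorElement_pow_left (Subgroup.mem_center_iff.mp hcenter (π x)) n
  rw [← QuotientGroup.eq_one_iff, ← QuotientGroup.eq_one_iff]
  exact Eq.congr_left hpow

theorem mem_upperCentralSeries_of_pow_mem
    (htf : ∀ (g : G) (n : ℕ), 0 < n → g ^ n = 1 → g = 1) {n : ℕ} (hn : 0 < n) {i : ℕ} {c : G}
    (hc : c ∈ Subgroup.upperCentralSeries G (i + 1))
    (hpow : c ^ n ∈ Subgroup.upperCentralSeries G i) : c ∈ Subgroup.upperCentralSeries G i := by
  induction i generalizing c with
  | zero => exact htf c n hn hpow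
  | succ i ih =>
    rw [Subgroup.mem_upperCentralSeries_succ_iff] at hc hpow ⊢
    exact fun g ↦
      ih (hc g) ((commutatorElement_pow_left_mem_upperCentralSeries_iff (hc g) n).1 (hpow g))

theorem commutatorElement_mem_upperCentralSeries_of_pow_left [Group.IsNilpotent G]
    (htf : ∀ (g : G) (n : ℕ), 0 < n → g ^ n = 1 → g = 1) {n : ℕ} (hn : 0 < n) {i : ℕ} {x y : G}
    (h : ⁅x ^ n, y⁆ ∈ Subgroup.upperCentralSeries G i) :
    ⁅x, y⁆ ∈ Subgroup.upperCentralSeries G i := by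
  have descend (k : ℕ) (hk : ⁅x, y⁆ ∈ Subgroup.upperCentralSeries G (i + k)) :
      ⁅x, y⁆ ∈ Subgroup.upperCentralSeries G i := by
    induction k with
    | zero => exact hk
    | succ k ih =>
      refine ih (mem_upperCentralSeries_of_pow_mem htf hn hk ?_)
      exact (commutatorElement_pow_left_mem_upperCentralSeries_iff hk n).1
        (Subgroup.upperCentralSeries_mono G (Nat.le_add_right i k) h)
  obtain ⟨m, hm⟩ := Group.IsNilpotent.nilpotent G
  exact descend m (Subgroup.upperCentralSeries_mono G (Nat.le_add_left m i)
    (hm ▸ Subgroup.mem_top ⁅x, y⁆))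

end Commutators

section PruferRank

variable {G G' : Type*} [Group G] [Group G']

theorem HasFinitePruferRank.of_injective (h : HasFinitePruferRank G') {f : G →* G'}
    (hf : Function.Injective f) : HasFinitePruferRank G := by
  classical
  obtain ⟨r, hr⟩ := h
  refine ⟨r, fun H hH ↦ ?_⟩
  obtain ⟨T, rfl⟩ := hH
  obtain ⟨S, hcard, hS⟩ := hr ((Subgroup.closure (T : Set G)).map f)
    ⟨T.image f, by rw [Finset.coe_image, MonoidHom.map_closure]⟩
  have hSf : (S : Set G') ⊆ f '' Subgroup.closure (T : Set G) := by
    rw [← Subgroup.coe_map, ← hS]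
    exact Subgroup.subset_closure
  obtain ⟨S, -, rfl⟩ := Finset.subset_set_image_iff.1 hSf
  refine ⟨S, by rwa [Finset.card_image_of_injective _ hf] at hcard, Subgroup.map_injective hf ?_⟩
  rw [← hS, Finset.coe_image, MonoidHom.map_closure]

theorem HasFinitePruferRank.of_surjective (h : HasFinitePruferRank G) {f : G →* G'}
    (hf : Function.Surjective f) : HasFinitePruferRank G' := by
  classical
  obtain ⟨r, hr⟩ := h
  refine ⟨r, fun H hH ↦ ?_⟩
  obtain ⟨T, rfl⟩ := hH
  obtain ⟨T, -, rfl⟩ := Finset.subset_set_image_iff.1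
    ((Set.subset_univ (T : Set G')).trans (Set.image_univ_of_surjective hf).ge)
  obtain ⟨S, hcard, hS⟩ := hr (Subgroup.closure (T : Set G)) ⟨T, rfl⟩
  refine ⟨S.image f, Finset.card_image_le.trans hcard, ?_⟩
  rw [Finset.coe_image, Finset.coe_image, ← MonoidHom.map_closure, hS, MonoidHom.map_closure]

theorem span_int_image_ofMul {A : Type*} [CommGroup A] (S : Set A) :
    Submodule.span ℤ (Additive.ofMul '' S) =
      AddSubgroup.toIntSubmodule (Subgroup.closure S).toAddSubgroup := by
  rw [Subgroup.toAddSubgroup_closure, AddSubgroup.toIntSubmodule_closure,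
    Equiv.image_eq_preimage_symm, Additive.ofMul_symm_eq]

theorem HasFinitePruferRank.rank_additive_lt_aleph0 {A : Type*} [CommGroup A]
    (h : HasFinitePruferRank A) : Module.rank ℤ (Additive A) < Cardinal.aleph0 := by
  classical
  obtain ⟨r, hr⟩ := h
  refine (rank_le fun s hs ↦ ?_).trans_lt (Cardinal.natCast_lt_aleph0 (n := r))
  obtain ⟨T, -, rfl⟩ := Finset.subset_set_image_iff.1
    ((Set.subset_univ (s : Set (Additive A))).trans
      (Set.image_univ_of_surjective Additive.ofMul.surjective).ge)
  obtain ⟨S, hcard, hS⟩ := hr (Subgroup.closure (T : Set A)) ⟨T, rfl⟩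
  have hspan : Submodule.span ℤ (T.image Additive.ofMul : Set (Additive A)) =
      Submodule.span ℤ (S.image Additive.ofMul : Set (Additive A)) := by
    rw [Finset.coe_image, Finset.coe_image, span_int_image_ofMul, span_int_image_ofMul, hS]
  have hrank := (rank_span_set hs).symm.trans_le
    (hspan ▸ rank_span_finset_le (R := ℤ) (S.image Additive.ofMul))
  rw [Finset.coe_sort_coe, Cardinal.mk_coe_finset, Nat.cast_le] at hrank
  exact hrank.trans (Finset.card_image_le.trans hcard)

end PruferRank

theorem exists_smul_mem_of_rank_le {R M : Type*} [CommRing R] [IsDomain R] [AddCommGroup M]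
    [Module R M] {P Q : Submodule R M} (hPQ : P ≤ Q) (hfin : Module.rank R Q < Cardinal.aleph0)
    (hrank : Module.rank R Q ≤ Module.rank R P) {x : M} (hx : x ∈ Q) :
    ∃ a : R, a ≠ 0 ∧ a • x ∈ P := by
  have hquot : Module.rank R (Q ⧸ P.submoduleOf Q) = 0 := by
    have hadd := rank_quotient_add_rank_of_isDomain (P.submoduleOf Q)
    rw [(Submodule.submoduleOfEquivOfLe hPQ).rank_eq,
      (Submodule.rank_mono hPQ).antisymm hrank] at hadd
    exact Cardinal.eq_of_add_eq_add_right (hadd.trans (zero_add _).symm) hfin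
  obtain ⟨a, ha, hax⟩ := rank_eq_zero_iff.1 hquot (Submodule.Quotient.mk ⟨x, hx⟩)
  rw [← Submodule.Quotient.mk_smul, Submodule.Quotient.mk_eq_zero] at hax
  exact ⟨a, ha, hax⟩

section Isolator

variable {G G' : Type*} [Group G] [Group G']

/-- The isolator of a subgroup `H`: the elements with a positive power in `H`. It is only a set,
as in a general group it need not be closed under multiplication. -/
def isolator (H : Subgroup G) : Set G :=
  {x | ∃ k : ℕ, 0 < k ∧ x ^ k ∈ H}

theorem subset_isolator_of_central_ker {f : G →* G'} (hf : f.ker ≤ Subgroup.center G)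
    {H K : Subgroup G} (hHK : H ≤ K) (hmap : (K.map f : Set G') ⊆ isolator (H.map f))
    (hker : ((K ⊓ f.ker : Subgroup G) : Set G) ⊆ isolator H) : (K : Set G) ⊆ isolator H := by
  intro x hx
  obtain ⟨k, hk, g, hg, hgx⟩ := hmap (Subgroup.mem_map_of_mem f hx)
  have hz : g⁻¹ * x ^ k ∈ f.ker := by
    rw [MonoidHom.mem_ker, map_mul, map_inv, map_pow, hgx, inv_mul_cancel]
  obtain ⟨l, hl, hzl⟩ := hker ⟨K.mul_mem (K.inv_mem (hHK hg)) (K.pow_mem hx k), hz⟩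
  have hcomm : Commute g (g⁻¹ * x ^ k) := Subgroup.mem_center_iff.1 (hf hz) g
  have hxkl : x ^ (k * l) = g ^ l * (g⁻¹ * x ^ k) ^ l := by
    rw [← hcomm.mul_pow, mul_inv_cancel_left, pow_mul]
  exact ⟨k * l, Nat.mul_pos hk hl, hxkl ▸ H.mul_mem (H.pow_mem hg l) hzl⟩

/-- The descending chain condition up to isolators: every descending chain of subgroups eventually
consists of subgroups each contained in the isolator of the next. -/
def IsolatorDCC (G : Type*) [Group G] : Prop :=
  ∀ K : ℕ → Subgroup G, Antitone K → ∃ m, ∀ n ≥ m, (K n : Set G) ⊆ isolator (K (n + 1))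

theorem IsolatorDCC.of_rank_additive_lt_aleph0 {A : Type*} [CommGroup A]
    (h : Module.rank ℤ (Additive A) < Cardinal.aleph0) : IsolatorDCC A := by
  intro K hK
  let L (n : ℕ) : Submodule ℤ (Additive A) := AddSubgroup.toIntSubmodule (K n).toAddSubgroup
  have hL : Antitone L := fun _ _ hmn _ hx ↦ hK hmn hx
  obtain ⟨m, hm⟩ := WellFoundedLT.antitone_chain_condition
    (f := fun n ↦ Module.rank ℤ (L n)) fun _ _ hmn ↦ Submodule.rank_mono (hL hmn)
  refine ⟨m, fun n hn x hx ↦ ?_⟩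
  have hrank : Module.rank ℤ (L n) ≤ Module.rank ℤ (L (n + 1)) :=
    ((hm n hn).symm.trans (hm (n + 1) (Nat.le_succ_of_le hn))).le
  obtain ⟨a, ha, hax⟩ := exists_smul_mem_of_rank_le (hL n.le_succ)
    ((Submodule.rank_le (L n)).trans_lt h) hrank (x := Additive.ofMul x) hx
  have hxa : x ^ a ∈ K (n + 1) := hax
  refine ⟨a.natAbs, Int.natAbs_pos.2 ha, ?_⟩
  rw [← zpow_natCast]
  rcases Int.natAbs_eq a with h | h
  · rwa [h] at hxa
  · rwa [h, zpow_neg, Subgroup.inv_mem_iff] at hxa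

theorem IsolatorDCC.of_central_ker {f : G →* G'} (hf : f.ker ≤ Subgroup.center G)
    (hker : IsolatorDCC f.ker) (h : IsolatorDCC G') : IsolatorDCC G := by
  intro K hK
  obtain ⟨m₁, hm₁⟩ := h (fun n ↦ (K n).map f) fun _ _ hmn ↦ Subgroup.map_mono (hK hmn)
  obtain ⟨m₂, hm₂⟩ := hker (fun n ↦ (K n).subgroupOf f.ker) fun _ _ hmn _ hx ↦ hK hmn hx
  exact ⟨max m₁ m₂, fun n hn ↦ subset_isolator_of_central_ker hf (hK n.le_succ)
    (hm₁ n (le_of_max_le_left hn)) fun x hx ↦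
      hm₂ n (le_of_max_le_right hn) (a := ⟨x, hx.2⟩) hx.1⟩

theorem HasFinitePruferRank.isolatorDCC [Group.IsNilpotent G] (h : HasFinitePruferRank G) :
    IsolatorDCC G := by
  revert h
  refine Group.nilpotent_center_quotient_ind
    (P := fun G _ _ ↦ HasFinitePruferRank G → IsolatorDCC G) G ?_ ?_
  · intro G _ _ _ K _
    refine ⟨0, fun n _ x _ ↦ ⟨1, one_pos, ?_⟩⟩
    rw [Subsingleton.elim (x ^ 1) 1]
    exact one_mem _
  · intro G _ _ ih h
    have hker := QuotientGroup.ker_mk' (Subgroup.center G)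
    refine .of_central_ker hker.le ?_ (ih (h.of_surjective (QuotientGroup.mk'_surjective _)))
    rw [hker]
    exact .of_rank_additive_lt_aleph0
      (h.of_injective (Subgroup.center G).subtype_injective).rank_additive_lt_aleph0

theorem IsolatorDCC.mem_isolator_range (h : IsolatorDCC G) {σ : G →* G}
    (hσ : Function.Injective σ) (x : G) : x ∈ isolator σ.range := by
  let τ : Monoid.End G := σ
  obtain ⟨m, hm⟩ := h (fun n ↦ (τ ^ n).range) <| antitone_nat_of_succ_le fun n ↦ by
    rintro _ ⟨g, rfl⟩
    exact ⟨σ g, rfl⟩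
  obtain ⟨k, hk, g, hg⟩ := hm m le_rfl ⟨x, rfl⟩
  exact ⟨k, hk, g, hσ.iterate m (hg.trans (map_pow (τ ^ m) x k).symm)⟩

theorem map_upperCentralSeries_le_of_mem_isolator_range [Group.IsNilpotent G]
    (htf : ∀ (g : G) (n : ℕ), 0 < n → g ^ n = 1 → g = 1) {σ : G →* G}
    (hσ : ∀ y, y ∈ isolator σ.range) (i : ℕ) :
    (Subgroup.upperCentralSeries G i).map σ ≤ Subgroup.upperCentralSeries G i := by
  induction i with
  | zero => simp
  | succ i ih =>
    rintro _ ⟨x, hx, rfl⟩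
    refine Subgroup.mem_upperCentralSeries_succ_iff.2 fun y ↦ ?_
    obtain ⟨k, hk, g, hg⟩ := hσ y
    have hxg : ⁅x, g⁆ ∈ Subgroup.upperCentralSeries G i :=
      Subgroup.mem_upperCentralSeries_succ_iff.1 hx g
    have hyk : ⁅y ^ k, σ x⁆ ∈ Subgroup.upperCentralSeries G i := by
      rw [← hg, ← map_commutatorElement, ← commutatorElement_inv, map_inv, inv_mem_iff]
      exact ih (Subgroup.mem_map_of_mem σ hxg)
    rw [← commutatorElement_inv, inv_mem_iff]
    exact commutatorElement_mem_upperCentralSeries_of_pow_left htf hk hyk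

end Isolator

/-- Let `N` be a torsion-free nilpotent group of finite Prüfer rank and `σ`
an injective endomorphism of `N`.  Then `σ` preserves the upper central series:
`σ(Zⁱ(N)) ≤ Zⁱ(N)` for every `i ≥ 0`; in particular `σ` maps the centre into itself. -/
theorem injective_endomorphism_preserves_upper_central_series
    {N : Type*} [Group N] [Group.IsNilpotent N]
    (htf : ∀ (g : N) (n : ℕ), 0 < n → g ^ n = 1 → g = 1)
    (hrank : HasFinitePruferRank N)
    (σ : N →* N) (hinj : Function.Injective σ) :
    (∀ i : ℕ, (upperCentralSeries N i).map σ ≤ upperCentralSeries N i) ∧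
      (∀ z ∈ Subgroup.center N, σ z ∈ Subgroup.center N) := by
  have hmap := map_upperCentralSeries_le_of_mem_isolator_range htf
    (hrank.isolatorDCC.mem_isolator_range hinj)
  refine ⟨hmap, fun z hz ↦ ?_⟩
  rw [← Subgroup.upperCentralSeries_one] at hz ⊢
  exact hmap 1 (Subgroup.mem_map_of_mem σ hz)
end

section
/- Let N be the group of upper unitriangular 3×3 rational matrices with (1,2)-entry a ∈ ℤ and (2,3)- and (1,3)-entries b, c ∈ ℤ[1/2]. The map φ₁ sending the matrix with parameters (a,b,c) to the matrix with parameters (2a, b/2, c) is a well-defined injective group endomorphism of N which is not surjective, and φ₁ restricts to the identity on the central subgroup Z = {matrices with parameters (0,0,c), c ∈ ℤ[1/2]}; in particular φ₁ induces an automorphism of the centre of N but is not an automorphism of N. -/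
/-!
Conjugation by `diag(x, y, z)` multiplies the parameters `(a, b, c)` by `x / y`, `y / z` and
`x / z`, so `φ₁` is the restriction to `N` of conjugation by `diag(2, 1, 2)`. It is therefore an
injective homomorphism, and it fixes `Z` since `x / z = 1`; it is not surjective because the
`(1,2)`-entries of its values are even integers.
-/

/-- `x ∈ ℤ[1/2]`, i.e. `x = m / 2^k` for some integer `m` and natural number `k`. -/
def IsDyadic (x : ℚ) : Prop := ∃ (m : ℤ) (k : ℕ), x = (m : ℚ) / 2 ^ k

lemma IsDyadic.add {x y : ℚ} (hx : IsDyadic x) (hy : IsDyadic y) : IsDyadic (x + y) := by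
  obtain ⟨m, k, rfl⟩ := hx
  obtain ⟨m', k', rfl⟩ := hy
  have h1 : ((2 : ℚ) ^ k) ≠ 0 := by positivity
  have h2 : ((2 : ℚ) ^ k') ≠ 0 := by positivity
  refine ⟨m * 2 ^ k' + m' * 2 ^ k, k + k', ?_⟩
  rw [div_add_div _ _ h1 h2, pow_add]
  push_cast
  ring_nf

lemma IsDyadic.neg {x : ℚ} (hx : IsDyadic x) : IsDyadic (-x) := by
  obtain ⟨m, k, rfl⟩ := hx
  exact ⟨-m, k, by push_cast; ring⟩

lemma IsDyadic.intMul (m : ℤ) {x : ℚ} (hx : IsDyadic x) : IsDyadic ((m : ℚ) * x) := by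
  obtain ⟨m', k, rfl⟩ := hx
  exact ⟨m * m', k, by push_cast; ring⟩

lemma IsDyadic.sub {x y : ℚ} (hx : IsDyadic x) (hy : IsDyadic y) : IsDyadic (x - y) := by
  simpa [sub_eq_add_neg] using hx.add hy.neg

/-- The upper unitriangular `3 × 3` rational matrix with parameters `(a, b, c)`:
rows `(1, a, c)`, `(0, 1, b)`, `(0, 0, 1)`. -/
def uni (a b c : ℚ) : Matrix (Fin 3) (Fin 3) ℚ := !![1, a, c; 0, 1, b; 0, 0, 1]

lemma uni_mul (a b c a' b' c' : ℚ) :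
    uni a b c * uni a' b' c' = uni (a + a') (b + b') (c + c' + a * b') := by
  ext i j
  fin_cases i <;> fin_cases j <;>
    simp [uni, Matrix.mul_fin_three] <;> ring

lemma uni_one : uni 0 0 0 = 1 := by
  ext i j
  fin_cases i <;> fin_cases j <;> simp [uni, Matrix.one_apply, Matrix.vecHead, Matrix.vecTail]

lemma uni_mul_inv (a b c : ℚ) : uni a b c * uni (-a) (-b) (a * b - c) = 1 := by
  rw [uni_mul, show a + -a = (0:ℚ) by ring, show b + -b = (0:ℚ) by ring,
    show c + (a * b - c) + a * -b = (0:ℚ) by ring, uni_one]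

lemma uni_inv_mul (a b c : ℚ) : uni (-a) (-b) (a * b - c) * uni a b c = 1 := by
  rw [uni_mul, show -a + a = (0:ℚ) by ring, show -b + b = (0:ℚ) by ring,
    show a * b - c + c + -a * b = (0:ℚ) by ring, uni_one]

/-- The unitriangular matrix with parameters `(a,b,c)` as an element of `GL₃(ℚ)`. -/
def uniUnit (a b c : ℚ) : Matrix.GeneralLinearGroup (Fin 3) ℚ :=
  ⟨uni a b c, uni (-a) (-b) (a * b - c), uni_mul_inv a b c, uni_inv_mul a b c⟩

/-- The group `N` of upper unitriangular `3 × 3` rational matrices with `(1,2)`-entry in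
`ℤ` and `(2,3)`- and `(1,3)`-entries in `ℤ[1/2]`, as a subgroup of `GL₃(ℚ)`. -/
def heisenbergN : Subgroup (Matrix.GeneralLinearGroup (Fin 3) ℚ) where
  carrier := {M | ∃ (a : ℤ) (b c : ℚ), IsDyadic b ∧ IsDyadic c ∧
    (M : Matrix (Fin 3) (Fin 3) ℚ) = uni (a : ℚ) b c}
  one_mem' := ⟨0, 0, 0, ⟨0, 0, by norm_num⟩, ⟨0, 0, by norm_num⟩, by
    push_cast; exact uni_one.symm⟩
  mul_mem' := by
    rintro M M' ⟨a, b, c, hb, hc, hM⟩ ⟨a', b', c', hb', hc', hM'⟩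
    refine ⟨a + a', b + b', c + c' + (a : ℚ) * b', hb.add hb',
      (hc.add hc').add (IsDyadic.intMul a hb'), ?_⟩
    push_cast
    rw [hM, hM', uni_mul]
  inv_mem' := by
    rintro M ⟨a, b, c, hb, hc, hM⟩
    refine ⟨-a, -b, (a : ℚ) * b - c, hb.neg, (IsDyadic.intMul a hb).sub hc, ?_⟩
    push_cast
    rw [hM, Matrix.inv_eq_right_inv (uni_mul_inv (a : ℚ) b c)]

lemma IsDyadic.half {x : ℚ} (hx : IsDyadic x) : IsDyadic (x / 2) := by
  obtain ⟨m, k, rfl⟩ := hx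
  exact ⟨m, k + 1, by rw [pow_succ, div_div]⟩

lemma isDyadic_zero : IsDyadic 0 := ⟨0, 0, by norm_num⟩

/-- The invertible diagonal matrix with diagonal `d`, as an element of the general linear group. -/
def diagonalGL {n R : Type*} [Fintype n] [DecidableEq n] [CommRing R] (d : n → Rˣ) :
    Matrix.GeneralLinearGroup n R :=
  Units.map (Matrix.diagonalRingHom n R : (n → R) →* Matrix n n R) (MulEquiv.piUnits.symm d)

lemma coe_diagonalGL {n R : Type*} [Fintype n] [DecidableEq n] [CommRing R] (d : n → Rˣ) :
    (diagonalGL d : Matrix n n R) = Matrix.diagonal fun i ↦ (d i : R) :=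
  rfl

lemma diagonal_mul_uni (d : Fin 3 → ℚˣ) (a b c : ℚ) :
    Matrix.diagonal (fun i ↦ (d i : ℚ)) * uni a b c =
      uni (d 0 * a / d 1) (d 1 * b / d 2) (d 0 * c / d 2) *
        Matrix.diagonal (fun i ↦ (d i : ℚ)) := by
  ext i j
  rw [Matrix.diagonal_mul, Matrix.mul_diagonal]
  fin_cases i <;> fin_cases j <;> simp [uni]

lemma coe_conj_diagonalGL_of_coe_eq_uni (d : Fin 3 → ℚˣ) {g : Matrix.GeneralLinearGroup (Fin 3) ℚ}
    {a b c : ℚ} (hg : (g : Matrix (Fin 3) (Fin 3) ℚ) = uni a b c) :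
    (MulAut.conj (diagonalGL d) g : Matrix (Fin 3) (Fin 3) ℚ) =
      uni (d 0 * a / d 1) (d 1 * b / d 2) (d 0 * c / d 2) := by
  rw [MulAut.conj_apply, Units.val_mul, Units.val_mul, Units.mul_inv_eq_iff_eq_mul, hg,
    coe_diagonalGL, diagonal_mul_uni]

/-- The automorphism of `GL₃(ℚ)` given by conjugation by `diag(2, 1, 2)`; its restriction to
`heisenbergN` is `φ₁`. -/
def conjDiagTwoOneTwo : MulAut (Matrix.GeneralLinearGroup (Fin 3) ℚ) :=
  MulAut.conj (diagonalGL ![Units.mk0 2 two_ne_zero, 1, Units.mk0 2 two_ne_zero])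

lemma coe_conjDiagTwoOneTwo_of_coe_eq_uni {g : Matrix.GeneralLinearGroup (Fin 3) ℚ} {a b c : ℚ}
    (hg : (g : Matrix (Fin 3) (Fin 3) ℚ) = uni a b c) :
    (conjDiagTwoOneTwo g : Matrix (Fin 3) (Fin 3) ℚ) = uni (2 * a) (b / 2) c := by
  simpa [conjDiagTwoOneTwo, -MulAut.conj_apply] using
    coe_conj_diagonalGL_of_coe_eq_uni ![Units.mk0 2 two_ne_zero, 1, Units.mk0 2 two_ne_zero] hg

lemma conjDiagTwoOneTwo_mem_heisenbergN {g : Matrix.GeneralLinearGroup (Fin 3) ℚ}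
    (hg : g ∈ heisenbergN) : conjDiagTwoOneTwo g ∈ heisenbergN := by
  obtain ⟨a, b, c, hb, hc, hg⟩ := hg
  exact ⟨2 * a, b / 2, c, hb.half, hc,
    by rw [coe_conjDiagTwoOneTwo_of_coe_eq_uni hg, Int.cast_mul, Int.cast_ofNat]⟩

/-- The endomorphism `φ₁` of `heisenbergN`, encoded as the restriction of a conjugation of
`GL₃(ℚ)` so that multiplicativity and injectivity are inherited. -/
def phiOne : heisenbergN →* heisenbergN :=
  (conjDiagTwoOneTwo.toMonoidHom.comp heisenbergN.subtype).codRestrict heisenbergN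
    fun g ↦ conjDiagTwoOneTwo_mem_heisenbergN g.2

lemma coe_phiOne (g : heisenbergN) :
    (phiOne g : Matrix.GeneralLinearGroup (Fin 3) ℚ) = conjDiagTwoOneTwo g :=
  rfl

lemma coe_phiOne_of_coe_eq_uni {g : heisenbergN} {a b c : ℚ}
    (hg : ((g : Matrix.GeneralLinearGroup (Fin 3) ℚ) : Matrix (Fin 3) (Fin 3) ℚ) = uni a b c) :
    ((phiOne g : Matrix.GeneralLinearGroup (Fin 3) ℚ) : Matrix (Fin 3) (Fin 3) ℚ) =
      uni (2 * a) (b / 2) c := by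
  rw [coe_phiOne, coe_conjDiagTwoOneTwo_of_coe_eq_uni hg]

lemma phiOne_injective : Function.Injective phiOne :=
  (MonoidHom.injective_codRestrict _ _ _).2
    (conjDiagTwoOneTwo.injective.comp heisenbergN.subtype_injective)

lemma exists_phiOne_zero_one_eq_two_mul (g : heisenbergN) :
    ∃ m : ℤ, ((phiOne g : Matrix.GeneralLinearGroup (Fin 3) ℚ) : Matrix (Fin 3) (Fin 3) ℚ) 0 1 =
      2 * m := by
  obtain ⟨a, b, c, -, -, hg⟩ := g.2
  exact ⟨a, by rw [coe_phiOne_of_coe_eq_uni hg]; rfl⟩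

lemma uniUnit_mem_heisenbergN (a : ℤ) {b c : ℚ} (hb : IsDyadic b) (hc : IsDyadic c) :
    uniUnit a b c ∈ heisenbergN :=
  ⟨a, b, c, hb, hc, rfl⟩

lemma phiOne_not_surjective : ¬ Function.Surjective phiOne := by
  intro hsurj
  obtain ⟨g, hg⟩ := hsurj ⟨_, uniUnit_mem_heisenbergN 1 isDyadic_zero isDyadic_zero⟩
  obtain ⟨m, hm⟩ := exists_phiOne_zero_one_eq_two_mul g
  rw [hg] at hm
  change ((1 : ℤ) : ℚ) = 2 * m at hm
  have one_eq_two_mul : 1 = 2 * m := by exact_mod_cast hm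
  lia

lemma phiOne_eq_self_of_coe_eq_uni_zero_zero {g : heisenbergN} {c : ℚ}
    (hg : ((g : Matrix.GeneralLinearGroup (Fin 3) ℚ) : Matrix (Fin 3) (Fin 3) ℚ) = uni 0 0 c) :
    phiOne g = g := by
  apply Subtype.ext
  apply Units.ext
  rw [coe_phiOne_of_coe_eq_uni hg, hg, mul_zero, zero_div]

/-- The map `φ₁` sending the unitriangular matrix with parameters
`(a, b, c)` to the one with parameters `(2a, b/2, c)` is a well-defined injective group
endomorphism of `N = heisenbergN` which is not surjective, and it restricts to the
identity on the central subgroup `Z = {matrices with parameters (0,0,c), c ∈ ℤ[1/2]}`;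
in particular `φ₁` induces an automorphism of the centre of `N` but is not an
automorphism of `N`. -/
theorem phi_one_injective_not_surjective_identity_on_center :
    ∃ φ : heisenbergN →* heisenbergN,
      (∀ (g : heisenbergN) (a b c : ℚ),
        ((g : Matrix.GeneralLinearGroup (Fin 3) ℚ) : Matrix (Fin 3) (Fin 3) ℚ) =
            uni a b c →
        (((φ g : Matrix.GeneralLinearGroup (Fin 3) ℚ)) : Matrix (Fin 3) (Fin 3) ℚ) =
            uni (2 * a) (b / 2) c) ∧
      Function.Injective φ ∧
      ¬ Function.Surjective φ ∧
      (∀ g : heisenbergN,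
        (∃ c : ℚ, IsDyadic c ∧
          ((g : Matrix.GeneralLinearGroup (Fin 3) ℚ) : Matrix (Fin 3) (Fin 3) ℚ) =
            uni 0 0 c) → φ g = g) := by
  exact ⟨phiOne, fun _ _ _ _ ↦ coe_phiOne_of_coe_eq_uni, phiOne_injective, phiOne_not_surjective,
    fun _ ⟨_, _, hg⟩ ↦ phiOne_eq_self_of_coe_eq_uni_zero_zero hg⟩
end
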